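/- Let H be an n-dimensional complex Hilbert space, N ≥ 2, let (q_i) be the weight numbers of a probability sequence, and set β = n − ∑_{i=1}^N 1/q_i². Assume β ≥ 0. Let (F,G) be a dual pair in H such that ⟨f_i, g_i⟩ = 1/q_i for every i and such that q_i q_j ⟨g_i, f_j⟩⟨g_j, f_i⟩ takes the same value c for all pairs i ≠ j. Then c = β / (∑_{r ≠ s} 1/(q_r q_s)), R_2^p(F,G) = 1 + √( β / (∑_{r ≠ s} 1/(q_r q_s)) ), and for every dual pair (F',G') in H with ⟨f'_i, g'_i⟩ = 1/q_i for every i, R_2^p(F,G) ≤ R_2^p(F',G'). -/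

import Mathlib

/-!
Put `P i j = ⟪F i, G j⟫`. Duality makes `P` idempotent, and its trace is `∑ 1 / q i = n`, which here
follows directly from the prescribed diagonal and the form of the weights. Hence
`∑ i, ∑ j, P i j * P j i = n`, and removing the diagonal gives
`∑_{i ≠ j} c i j / (q i * q j) = β`, where `c i j = q i * q j * P i j * P j i`
(`sum_offdiag_products`). If all `c i j` agree, this determines their common value.

The operator `errOp q F G i j` has range in the span of `G i, G j`, where it acts through a
`2 × 2` matrix with unit diagonal and off-diagonal product `c i j`. So each nonzero eigenvalue `μ`
satisfies `(μ - 1) ^ 2 = c i j` (`spectralRadius_errOp_le`), while `1 + z` is an eigenvalue whenever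
`z ^ 2 = c i j` and `0 ≤ re z` (`one_add_mem_spectrum`). This gives the value of `R2p` in the
constant case. For an arbitrary competitor, the weighted mean of the `re (c i j)` is
`t = β / ∑_{r ≠ s} 1 / (q r * q s)`, so some pair has `t ≤ re (c i j)`. For a root `z` of `c i j`
with `0 ≤ re z` we get `re z ^ 2 ≥ re (z ^ 2) ≥ t`, whence `‖1 + z‖ ≥ 1 + √t`.
-/

open scoped InnerProductSpace ENNReal

variable {H : Type*} [NormedAddCommGroup H] [InnerProductSpace ℂ H]

/-- The two-erasure error operator `f ↦ q i ⟨f, f i⟩ g i + q j ⟨f, f j⟩ g j`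
(paper's `⟨x, y⟩`, linear in the first argument, is Mathlib's `⟪y, x⟫_ℂ`). -/
noncomputable def errOp {N : ℕ} (q : Fin N → ℝ) (F G : Fin N → H) (i j : Fin N) :
    H →L[ℂ] H :=
  (q i : ℂ) • (innerSL ℂ (F i)).smulRight (G i) +
    (q j : ℂ) • (innerSL ℂ (F j)).smulRight (G j)

/-- `R₂ᵖ(F,G) = max_{i ≠ j} ρ(errOp q F G i j)`, as a supremum in `ℝ≥0∞`. -/
noncomputable def R2p {N : ℕ} (q : Fin N → ℝ) (F G : Fin N → H) : ℝ≥0∞ :=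
  ⨆ i, ⨆ j, ⨆ (_ : i ≠ j), spectralRadius ℂ (errOp q F G i j)

lemma errOp_apply {N : ℕ} (q : Fin N → ℝ) (F G : Fin N → H) (i j : Fin N) (v : H) :
    errOp q F G i j v = ((q i : ℂ) * ⟪F i, v⟫_ℂ) • G i + ((q j : ℂ) * ⟪F j, v⟫_ℂ) • G j := by
  simp only [errOp, add_apply, FunLike.coe_smul, Pi.smul_apply,
    ContinuousLinearMap.smulRight_apply, innerSL_apply_apply, smul_smul]

lemma mem_spectrum_iff_exists_eigenvector [FiniteDimensional ℂ H] (T : H →L[ℂ] H) (μ : ℂ) :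
    μ ∈ spectrum ℂ T ↔ ∃ v : H, v ≠ 0 ∧ T v = μ • v := by
  have h1 : spectrum ℂ T = spectrum ℂ (T : H →ₗ[ℂ] H) := by
    have := AlgEquiv.spectrum_eq (Module.End.toContinuousLinearMap (𝕜 := ℂ) H) (T : H →ₗ[ℂ] H)
    exact this
  rw [h1, ← Module.End.hasEigenvalue_iff_mem_spectrum]
  constructor
  · intro h
    obtain ⟨v, hv⟩ := h.exists_hasEigenvector
    exact ⟨v, hv.2, hv.apply_eq_smul⟩
  · rintro ⟨v, hv0, hv⟩
    exact Module.End.hasEigenvalue_of_hasEigenvector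
      (Module.End.hasEigenvector_iff.2 ⟨Module.End.mem_eigenspace_iff.2 hv, hv0⟩)

/-- If `c` is the off-diagonal product of the pair `(i, j)`, every nonzero eigenvalue `μ` of the
error operator satisfies `(μ - 1) ^ 2 = c`, so the spectral radius is at most `1 + √‖c‖`. -/
lemma spectralRadius_errOp_le [FiniteDimensional ℂ H] {N : ℕ} (q : Fin N → ℝ) (F G : Fin N → H)
    (hd : ∀ i, (q i : ℂ) * ⟪F i, G i⟫_ℂ = 1) (i j : Fin N) (c : ℂ)
    (hc : ((q i * q j : ℝ) : ℂ) * ⟪F j, G i⟫_ℂ * ⟪F i, G j⟫_ℂ = c) :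
    spectralRadius ℂ (errOp q F G i j) ≤ ENNReal.ofReal (1 + √‖c‖) := by
  refine iSup₂_le fun μ hμ => ?_
  obtain ⟨v, hv0, hv⟩ := (mem_spectrum_iff_exists_eigenvector _ _).1 hμ
  rw [errOp_apply] at hv
  rw [← enorm_eq_nnnorm, ← ofReal_norm]
  apply ENNReal.ofReal_le_ofReal
  have hx := congrArg (fun w => ⟪F i, w⟫_ℂ) hv
  have hy := congrArg (fun w => ⟪F j, w⟫_ℂ) hv
  simp only [inner_add_right, inner_smul_right] at hx hy
  push_cast at hc
  have hxx : ((μ - 1) ^ 2 - c) * ⟪F i, v⟫_ℂ = 0 := by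
    linear_combination (-(μ - 1)) * hx - (q j : ℂ) * ⟪F i, G j⟫_ℂ * hy
      + ⟪F i, v⟫_ℂ * hc + (μ - 1) * ⟪F i, v⟫_ℂ * hd i
      + (q j : ℂ) * ⟪F i, G j⟫_ℂ * ⟪F j, v⟫_ℂ * hd j
  have hyy : ((μ - 1) ^ 2 - c) * ⟪F j, v⟫_ℂ = 0 := by
    linear_combination (-(μ - 1)) * hy - (q i : ℂ) * ⟪F j, G i⟫_ℂ * hx
      + ⟪F j, v⟫_ℂ * hc + (μ - 1) * ⟪F j, v⟫_ℂ * hd j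
      + (q i : ℂ) * ⟪F j, G i⟫_ℂ * ⟪F i, v⟫_ℂ * hd i
  by_cases h : (μ - 1) ^ 2 - c = 0
  · have h2 : ‖μ - 1‖ = √‖c‖ := by
      rw [← sub_eq_zero.1 h, norm_pow, Real.sqrt_sq (norm_nonneg _)]
    calc ‖μ‖ = ‖1 + (μ - 1)‖ := by ring_nf
      _ ≤ ‖(1 : ℂ)‖ + ‖μ - 1‖ := norm_add_le _ _
      _ = 1 + √‖c‖ := by rw [h2, norm_one]
  · have hx0 := (mul_eq_zero.1 hxx).resolve_left h
    have hy0 := (mul_eq_zero.1 hyy).resolve_left h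
    have hμ0 : μ = 0 := by
      simpa [hx0, hy0, hv0, eq_comm] using hv
    rw [hμ0, norm_zero]
    positivity

/-- For `z ≠ 0` the eigenvector is `q i * ⟪F i, G j⟫ • G i + z • G j`. For `z = 0` one of the two
off-diagonal entries vanishes, and then `G j` or `G i` is an eigenvector. The condition `0 ≤ re z`
excludes `z = -1`, for which the combination above may vanish. -/
lemma one_add_mem_spectrum [FiniteDimensional ℂ H] {N : ℕ} (q : Fin N → ℝ) (F G : Fin N → H)
    (hd : ∀ i, (q i : ℂ) * ⟪F i, G i⟫_ℂ = 1) (i j : Fin N) (z : ℂ) (hz : 0 ≤ z.re)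
    (hc : ((q i * q j : ℝ) : ℂ) * ⟪F j, G i⟫_ℂ * ⟪F i, G j⟫_ℂ = z ^ 2) :
    1 + z ∈ spectrum ℂ (errOp q F G i j) := by
  rw [mem_spectrum_iff_exists_eigenvector]
  push_cast at hc
  have hG : ∀ k, G k ≠ 0 := by
    intro k hk
    have := hd k
    simp [hk] at this
  have hq : ∀ k, (q k : ℂ) ≠ 0 := fun k => left_ne_zero_of_mul_eq_one (hd k)
  by_cases hz0 : z = 0
  · subst hz0
    have : ⟪F j, G i⟫_ℂ = 0 ∨ ⟪F i, G j⟫_ℂ = 0 := by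
      simpa [hq] using hc
    rcases this with h | h
    · exact ⟨G i, hG i, by simp [errOp_apply, h, hd i]⟩
    · exact ⟨G j, hG j, by simp [errOp_apply, h, hd j]⟩
  · refine ⟨((q i : ℂ) * ⟪F i, G j⟫_ℂ) • G i + z • G j, ?_, ?_⟩
    · intro h
      have h1 := congrArg (fun w => (q j : ℂ) * ⟪F j, w⟫_ℂ) h
      simp only [inner_add_right, inner_smul_right, inner_zero_right, mul_zero] at h1
      have h2 : z * (z + 1) = 0 := by linear_combination h1 - hc - z * hd j
      have h3 : z = -1 := eq_neg_of_add_eq_zero_left ((mul_eq_zero.1 h2).resolve_left hz0)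
      rw [h3] at hz
      norm_num at hz
    · rw [errOp_apply, smul_add, smul_smul, smul_smul]
      simp only [inner_add_right, inner_smul_right]
      congr 2
      · linear_combination (q i : ℂ) * ⟪F i, G j⟫_ℂ * hd i
      · linear_combination hc + z * hd j

/-- If the off-diagonal product of the pair `(i, j)` has real part at least `t`, its square root
`z` with `0 ≤ re z` satisfies `√t ≤ re z`, so `‖1 + z‖ ≥ 1 + √t`; here `√t = 0` for `t < 0`. -/
lemma le_spectralRadius_errOp [FiniteDimensional ℂ H] {N : ℕ} (q : Fin N → ℝ) (F G : Fin N → H)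
    (hd : ∀ i, (q i : ℂ) * ⟪F i, G i⟫_ℂ = 1) (i j : Fin N) (t : ℝ)
    (ht : t ≤ (((q i * q j : ℝ) : ℂ) * ⟪F j, G i⟫_ℂ * ⟪F i, G j⟫_ℂ).re) :
    ENNReal.ofReal (1 + √t) ≤ spectralRadius ℂ (errOp q F G i j) := by
  obtain ⟨z, hz, hzc⟩ : ∃ z : ℂ, 0 ≤ z.re ∧
      ((q i * q j : ℝ) : ℂ) * ⟪F j, G i⟫_ℂ * ⟪F i, G j⟫_ℂ = z ^ 2 := by
    obtain ⟨w, hw⟩ := IsAlgClosed.exists_pow_nat_eq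
      (((q i * q j : ℝ) : ℂ) * ⟪F j, G i⟫_ℂ * ⟪F i, G j⟫_ℂ) zero_lt_two
    rcases le_total 0 w.re with h | h
    · exact ⟨w, h, hw.symm⟩
    · exact ⟨-w, by simpa using h, by rw [← hw]; ring⟩
  rw [hzc, sq, Complex.mul_re] at ht
  have h1 : √t ≤ z.re := Real.sqrt_le_iff.2 ⟨hz, by nlinarith [mul_self_nonneg z.im]⟩
  have h2 : 1 + √t ≤ ‖1 + z‖ := by
    have := Complex.re_le_norm (1 + z)
    simp only [Complex.add_re, Complex.one_re] at this
    linarith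
  calc ENNReal.ofReal (1 + √t) ≤ ENNReal.ofReal ‖1 + z‖ := ENNReal.ofReal_le_ofReal h2
    _ = (‖1 + z‖₊ : ℝ≥0∞) := by rw [ofReal_norm, enorm_eq_nnnorm]
    _ ≤ _ := le_iSup₂ (f := fun (k : ℂ) (_ : k ∈ spectrum ℂ (errOp q F G i j)) => (‖k‖₊ : ℝ≥0∞))
        (1 + z) (one_add_mem_spectrum q F G hd i j z hz hzc)

/-- The off-diagonal part of `trace (P * P) = trace P` for the idempotent cross-Gram matrix
`P i j = ⟪F i, G j⟫` of a dual pair. -/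
lemma sum_offdiag_products {n N : ℕ} (q : Fin N → ℝ) (hsum : ∑ i, 1 / q i = (n : ℝ))
    (F G : Fin N → H) (hdual : ∀ f : H, ∑ i, ⟪F i, f⟫_ℂ • G i = f)
    (hP : ∀ i, ⟪F i, G i⟫_ℂ = ((1 / q i : ℝ) : ℂ)) :
    ∑ i, ∑ j, (if j ≠ i then ⟪F j, G i⟫_ℂ * ⟪F i, G j⟫_ℂ else 0)
      = (((n : ℝ) - ∑ i, 1 / (q i) ^ 2 : ℝ) : ℂ) := by
  have hrow : ∀ i, ∑ j, ⟪F j, G i⟫_ℂ * ⟪F i, G j⟫_ℂ = ⟪F i, G i⟫_ℂ := by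
    intro i
    conv_rhs => rw [← hdual (G i)]
    simp
  have hoffrow : ∀ i, ∑ j, (if j ≠ i then ⟪F j, G i⟫_ℂ * ⟪F i, G j⟫_ℂ else 0)
      = ((1 / q i - 1 / q i ^ 2 : ℝ) : ℂ) := by
    intro i
    have h1 := hrow i
    rw [← Finset.add_sum_erase _ _ (Finset.mem_univ i), hP] at h1
    have h2 : ∑ j, (if j ≠ i then ⟪F j, G i⟫_ℂ * ⟪F i, G j⟫_ℂ else 0)
        = ∑ j ∈ Finset.univ.erase i, ⟪F j, G i⟫_ℂ * ⟪F i, G j⟫_ℂ := by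
      rw [← Finset.sum_filter]
      congr 1
      ext k
      simp
    rw [h2, eq_sub_of_add_eq' h1]
    push_cast
    ring
  rw [Finset.sum_congr rfl fun i _ => hoffrow i, ← Complex.ofReal_sum, Finset.sum_sub_distrib, hsum]

/-- Let `β = n − ∑ 1/q i² ≥ 0` and let `(F,G)` be a dual pair with
`⟨f i, g i⟩ = 1/q i` for all `i` and constant off-diagonal products
`q i q j ⟨g i, f j⟩⟨g j, f i⟩ = c`.  Then `c = β / (∑_{r ≠ s} 1/(q r q s))`,
`R₂ᵖ(F,G) = 1 + √(β / ∑_{r ≠ s} 1/(q r q s))`, and `(F,G)` minimizes `R₂ᵖ` among all dual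
pairs `(F',G')` with `⟨f' i, g' i⟩ = 1/q i` for all `i`.
Paper's `⟨x, y⟩` (linear in the first argument) is Mathlib's `⟪y, x⟫_ℂ`. -/
theorem two_erasure_optimal_dual_pair_nonneg_beta {n N : ℕ}
    [FiniteDimensional ℂ H]
    (hn : 1 ≤ n) (hdim : Module.finrank ℂ H = n) (hN : 2 ≤ N)
    (p : Fin N → ℝ) (hp0 : ∀ i, 0 ≤ p i) (hp1 : ∀ i, p i < 1) (hpsum : ∑ i, p i = 1)
    (q : Fin N → ℝ) (hq : ∀ i, q i = ((N : ℝ) - 1) / ((n : ℝ) * (1 - p i)))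
    (hbeta : 0 ≤ (n : ℝ) - ∑ i, 1 / (q i) ^ 2)
    (F G : Fin N → H)
    (hdual : ∀ f : H, ∑ i, ⟪F i, f⟫_ℂ • G i = f)
    (hdiag : ∀ i, ⟪G i, F i⟫_ℂ = ((1 / q i : ℝ) : ℂ))
    (c : ℂ)
    (hoff : ∀ i j, i ≠ j →
      ((q i * q j : ℝ) : ℂ) * ⟪F j, G i⟫_ℂ * ⟪F i, G j⟫_ℂ = c) :
    c = ((((n : ℝ) - ∑ i, 1 / (q i) ^ 2) /
          (∑ r, ∑ s, if s ≠ r then 1 / (q r * q s) else 0) : ℝ) : ℂ) ∧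
    R2p q F G = ENNReal.ofReal (1 + Real.sqrt
      (((n : ℝ) - ∑ i, 1 / (q i) ^ 2) /
        (∑ r, ∑ s, if s ≠ r then 1 / (q r * q s) else 0))) ∧
    (∀ F' G' : Fin N → H, (∀ f : H, ∑ i, ⟪F' i, f⟫_ℂ • G' i = f) →
      (∀ i, ⟪G' i, F' i⟫_ℂ = ((1 / q i : ℝ) : ℂ)) →
      R2p q F G ≤ R2p q F' G') := by
  have hN1 : (0 : ℝ) < (N : ℝ) - 1 := by
    have : (2 : ℝ) ≤ N := by exact_mod_cast hN
    linarith
  have hn0 : (0 : ℝ) < n := by exact_mod_cast hn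
  have hqpos : ∀ i, 0 < q i := fun i => by
    rw [hq]
    exact div_pos hN1 (mul_pos hn0 (sub_pos.2 (hp1 i)))
  have hsum : ∑ i, 1 / q i = (n : ℝ) := by
    have : ∀ i, 1 / q i = (n : ℝ) / ((N : ℝ) - 1) * (1 - p i) := fun i => by
      rw [hq, one_div_div]
      ring
    rw [Finset.sum_congr rfl fun i _ => this i, ← Finset.mul_sum, Finset.sum_sub_distrib, hpsum]
    simp only [Finset.sum_const, Finset.card_univ, Fintype.card_fin, nsmul_eq_mul, mul_one]
    field_simp
  have hP : ∀ F G : Fin N → H, (∀ i, ⟪G i, F i⟫_ℂ = ((1 / q i : ℝ) : ℂ)) →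
      ∀ i, ⟪F i, G i⟫_ℂ = ((1 / q i : ℝ) : ℂ) := by
    intro F G h i
    rw [← inner_conj_symm, h, Complex.conj_ofReal]
  have hd : ∀ F G : Fin N → H, (∀ i, ⟪G i, F i⟫_ℂ = ((1 / q i : ℝ) : ℂ)) →
      ∀ i, (q i : ℂ) * ⟪F i, G i⟫_ℂ = 1 := by
    intro F G h i
    rw [hP F G h, ← Complex.ofReal_mul, mul_one_div_cancel (hqpos i).ne', Complex.ofReal_one]
  set S : ℝ := ∑ r, ∑ s, if s ≠ r then 1 / (q r * q s) else 0 with hS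
  set β : ℝ := (n : ℝ) - ∑ i, 1 / (q i) ^ 2 with hβ
  obtain ⟨a, b, hab⟩ : ∃ a b : Fin N, a ≠ b :=
    ⟨⟨0, by omega⟩, ⟨1, by omega⟩, by simp⟩
  have hterm : ∀ r s : Fin N, 0 ≤ if s ≠ r then 1 / (q r * q s) else 0 := fun r s => by
    have := hqpos r
    have := hqpos s
    split_ifs <;> positivity
  have hSpos : 0 < S := by
    refine Finset.sum_pos' (fun r _ => Finset.sum_nonneg fun s _ => hterm r s)
      ⟨a, Finset.mem_univ a, Finset.sum_pos' (fun s _ => hterm a s) ⟨b, Finset.mem_univ b, ?_⟩⟩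
    rw [if_pos hab.symm]
    exact one_div_pos.2 (mul_pos (hqpos a) (hqpos b))
  have hsumS : ∀ x : ℂ, ∑ r, ∑ s, (if s ≠ r then x * ((1 / (q r * q s) : ℝ) : ℂ) else 0)
      = x * (S : ℂ) := by
    intro x
    rw [hS, Complex.ofReal_sum, Finset.mul_sum]
    refine Finset.sum_congr rfl fun r _ => ?_
    rw [Complex.ofReal_sum, Finset.mul_sum]
    refine Finset.sum_congr rfl fun s _ => ?_
    split_ifs <;> simp
  have hcval : c = ((β / S : ℝ) : ℂ) := by
    have h := sum_offdiag_products q hsum F G hdual (hP F G hdiag)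
    have h2 : ∑ r, ∑ s, (if s ≠ r then ⟪F s, G r⟫_ℂ * ⟪F r, G s⟫_ℂ else 0)
        = ∑ r, ∑ s, (if s ≠ r then c * ((1 / (q r * q s) : ℝ) : ℂ) else 0) := by
      refine Finset.sum_congr rfl fun r _ => Finset.sum_congr rfl fun s _ => ?_
      split_ifs with hne
      · rw [← hoff r s (Ne.symm hne)]
        have h3 : (q r : ℂ) ≠ 0 := by exact_mod_cast (hqpos r).ne'
        have h4 : (q s : ℂ) ≠ 0 := by exact_mod_cast (hqpos s).ne'
        push_cast
        field_simp
      · rfl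
    rw [h2, hsumS] at h
    rw [Complex.ofReal_div]
    exact eq_div_of_mul_eq (by exact_mod_cast hSpos.ne') h
  have ht0 : 0 ≤ β / S := div_nonneg hbeta hSpos.le
  have hle : R2p q F G ≤ ENNReal.ofReal (1 + √(β / S)) := by
    refine iSup_le fun i => iSup_le fun j => iSup_le fun hij => ?_
    have := spectralRadius_errOp_le q F G (hd F G hdiag) i j c (hoff i j hij)
    rwa [hcval, Complex.norm_real, Real.norm_of_nonneg ht0] at this
  have hlower : ∀ F' G' : Fin N → H, (∀ f : H, ∑ i, ⟪F' i, f⟫_ℂ • G' i = f) →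
      (∀ i, ⟪G' i, F' i⟫_ℂ = ((1 / q i : ℝ) : ℂ)) →
      ENNReal.ofReal (1 + √(β / S)) ≤ R2p q F' G' := by
    intro F' G' hdual' hdiag'
    -- The weighted mean of the real parts of the off-diagonal products is `β / S`.
    obtain ⟨i, j, hij, ht⟩ : ∃ i j : Fin N, i ≠ j ∧
        β / S ≤ (((q i * q j : ℝ) : ℂ) * ⟪F' j, G' i⟫_ℂ * ⟪F' i, G' j⟫_ℂ).re := by
      by_contra! hcon
      have h := congrArg Complex.re (sum_offdiag_products q hsum F' G' hdual' (hP F' G' hdiag'))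
      rw [Complex.ofReal_re, Complex.re_sum] at h
      have hlt : ∀ r s : Fin N, s ≠ r →
          (⟪F' s, G' r⟫_ℂ * ⟪F' r, G' s⟫_ℂ).re < β / S * (1 / (q r * q s)) := by
        intro r s hne
        have h1 := hcon r s (Ne.symm hne)
        rw [mul_assoc, Complex.re_ofReal_mul] at h1
        rw [mul_one_div, lt_div_iff₀ (mul_pos (hqpos r) (hqpos s))]
        linarith
      have hle' : ∀ r s : Fin N,
          (if s ≠ r then ⟪F' s, G' r⟫_ℂ * ⟪F' r, G' s⟫_ℂ else 0).re
            ≤ β / S * (if s ≠ r then 1 / (q r * q s) else 0) := by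
        intro r s
        split_ifs with hne
        · exact (hlt r s hne).le
        · simp
      have hfin : β < β / S * S := by
        conv_lhs => rw [hβ, ← h]
        rw [hS, Finset.mul_sum]
        simp only [Complex.re_sum, Finset.mul_sum]
        refine Finset.sum_lt_sum (fun r _ => Finset.sum_le_sum fun s _ => hle' r s)
          ⟨a, Finset.mem_univ a, Finset.sum_lt_sum (fun s _ => hle' a s) ⟨b, Finset.mem_univ b, ?_⟩⟩
        rw [if_pos hab.symm, if_pos hab.symm]
        exact hlt a b hab.symm
      rw [div_mul_cancel₀ _ hSpos.ne'] at hfin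
      exact lt_irrefl _ hfin
    exact (le_spectralRadius_errOp q F' G' (hd F' G' hdiag') i j _ ht).trans
      (le_iSup_of_le i (le_iSup_of_le j (le_iSup_of_le hij le_rfl)))
  exact ⟨hcval, le_antisymm hle (hlower F G hdual hdiag),
    fun F' G' h1 h2 => hle.trans (hlower F' G' h1 h2)⟩
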